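/- arXiv:2408.13125 — 9 statements merged into one kernel-verified Lean document; each statement's English description precedes it below -/
import Mathlib

section
/- Let c, t, T be real numbers with t ≠ 0 and T ≠ 0, and set s = T/t + t/T (note s ≠ 0 since s = (t² + T²)/(tT)). Define x = c·(1/t + t)/s and y = c·(1/T − T)/s. Then the point (x, y) lies on the elliptic Apollonian circle determined by t and on the hyperbolic Apollonian circle determined by T; that is, x² + y² − c² = (1/t − t)·c·y and x² + y² + c² = (1/T + T)·c·x. -/
/-- De Casteljau's common parametrization of the pencil of Apollonian circles with
base/limiting points `G = (c,0)`, `D = (-c,0)`: the point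
`(x, y) = (c·(1/t + t)/s, c·(1/T − T)/s)` with `s = T/t + t/T` lies on the elliptic
Apollonian circle of parameter `t` and on the hyperbolic Apollonian circle of
parameter `T`. -/
theorem apollonian_circles_common_point (c t T : ℝ) (ht : t ≠ 0) (hT : T ≠ 0)
    (s : ℝ) (hs : s = T / t + t / T)
    (x y : ℝ) (hx : x = c * (1 / t + t) / s) (hy : y = c * (1 / T - T) / s) :
    x ^ 2 + y ^ 2 - c ^ 2 = (1 / t - t) * c * y ∧
    x ^ 2 + y ^ 2 + c ^ 2 = (1 / T + T) * c * x := by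
  have hN : t ^ 2 + T ^ 2 ≠ 0 := by positivity
  have hs' : s = (t ^ 2 + T ^ 2) / (t * T) := by
    rw [hs]; field_simp; ring
  have hx' : x = c * T * (1 + t ^ 2) / (t ^ 2 + T ^ 2) := by
    rw [hx, hs']; field_simp
  have hy' : y = c * t * (1 - T ^ 2) / (t ^ 2 + T ^ 2) := by
    rw [hy, hs']; field_simp
  rw [hx', hy']
  constructor
  · field_simp
    ring
  · field_simp
    ring
end

section
/- Let c, t, T be real numbers with t ≠ 0, t ≠ 1, t ≠ −1 and T ≠ 0, and set D = (1/t − t)·(1/T + T) (note D ≠ 0). Define x = 2c·(1/t + t)/D and y = 2c·(1/T − T)/D. Then the point (x, y) lies on the confocal ellipse determined by t and on the confocal hyperbola determined by T; that is, (x/(1/t + t))² + (y/2)² = (c/(1/t − t))² and ((1/T − T)·x/2)² − y² = (c·(1/T − T)/(1/T + T))². -/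
/-- De Casteljau's common parametrization of the confocal conics with foci
`G = (c,0)`, `D = (-c,0)`: the point
`(x, y) = (2c·(1/t + t)/D, 2c·(1/T − T)/D)` with `D = (1/t − t)·(1/T + T)` lies on the
confocal ellipse of parameter `t` and on the confocal hyperbola of parameter `T`
(the latter stated in denominator-cleared form). -/
theorem confocal_conics_common_point (c t T : ℝ) (ht : t ≠ 0) (ht1 : t ≠ 1)
    (ht1' : t ≠ -1) (hT : T ≠ 0)
    (D : ℝ) (hD : D = (1 / t - t) * (1 / T + T))
    (x y : ℝ) (hx : x = 2 * c * (1 / t + t) / D) (hy : y = 2 * c * (1 / T - T) / D) :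
    (x / (1 / t + t)) ^ 2 + (y / 2) ^ 2 = (c / (1 / t - t)) ^ 2 ∧
    ((1 / T - T) * x / 2) ^ 2 - y ^ 2 = (c * (1 / T - T) / (1 / T + T)) ^ 2 := by
  have ha : 1 / t + t ≠ 0 := by
    have h : 1 / t + t = (1 + t ^ 2) / t := by field_simp
    rw [h]
    exact div_ne_zero (by positivity) ht
  have hA : 1 / T + T ≠ 0 := by
    have h : 1 / T + T = (1 + T ^ 2) / T := by field_simp
    rw [h]
    exact div_ne_zero (by positivity) hT
  have hb : 1 / t - t ≠ 0 := by
    have h : 1 / t - t = (1 - t) * (1 + t) / t := by field_simp; ring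
    rw [h]
    refine div_ne_zero (mul_ne_zero (fun h => ht1 (by linarith)) (fun h => ht1' (by linarith))) ht
  have h1 : (1 / t + t) ^ 2 = (1 / t - t) ^ 2 + 4 := by field_simp; ring
  have h2 : (1 / T + T) ^ 2 = (1 / T - T) ^ 2 + 4 := by field_simp; ring
  subst hD hx hy
  generalize 1 / t + t = a at *
  generalize 1 / t - t = b at *
  generalize 1 / T + T = A at *
  generalize 1 / T - T = B at *
  constructor
  · have e : (2 * c * a / (b * A) / a) ^ 2 + (2 * c * B / (b * A) / 2) ^ 2
        = c ^ 2 * (B ^ 2 + 4) / (b * A) ^ 2 := by field_simp; ring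
    rw [e, ← h2]
    field_simp
  · have e : (B * (2 * c * a / (b * A)) / 2) ^ 2 - (2 * c * B / (b * A)) ^ 2
        = c ^ 2 * B ^ 2 * (a ^ 2 - 4) / (b * A) ^ 2 := by field_simp; ring
    rw [e, h1]
    field_simp
    ring
end

section
/- Let c₁, c₂ be two distinct points of the complex plane ℂ and let R = dist(c₁, c₂). Let f be the inversion with centre c₁ and radius R and let g be the inversion with centre c₂ and radius R. Then for every z ∈ ℂ with z ≠ c₁ and z ≠ c₂, applying the six alternating inversions f, g, f, g, f, g returns z; that is, (g ∘ f)^[3](z) = z. -/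
open EuclideanGeometry

/-- Inversion in complex form; holds at the centre too, thanks to division by zero. -/
lemma inversion_complex_form (c z : ℂ) (R : ℝ) :
    inversion c R z = c + (R : ℂ) ^ 2 / (starRingEnd ℂ) (z - c) := by
  by_cases h : z = c
  · subst h; simp
  have h1 : z - c ≠ 0 := sub_ne_zero.mpr h
  have h2 : (starRingEnd ℂ) (z - c) ≠ 0 := (map_ne_zero _).mpr h1
  have h3 : ((dist z c : ℝ) : ℂ) ^ 2 = (z - c) * (starRingEnd ℂ) (z - c) := by
    rw [Complex.mul_conj, Complex.normSq_eq_norm_sq, dist_eq_norm]; push_cast; rfl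
  rw [inversion, vsub_eq_sub, vadd_eq_add, Complex.real_smul, add_comm]
  push_cast
  rw [div_pow, h3]
  field_simp

/-- The composite of the two inversions is a Möbius map of order three. -/
lemma inversion_comp_moebius (c₁ c₂ z : ℂ) (h1 : z ≠ c₁) (h2 : z ≠ c₂) (hne : c₁ ≠ c₂) :
    inversion c₂ (dist c₁ c₂) (inversion c₁ (dist c₁ c₂) z)
      = c₁ + (c₂ - c₁) ^ 2 / (c₂ - z) := by
  have hd : c₂ - c₁ ≠ 0 := sub_ne_zero.mpr hne.symm
  have hd' : (starRingEnd ℂ) (c₂ - c₁) ≠ 0 := (map_ne_zero _).mpr hd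
  have hw : z - c₁ ≠ 0 := sub_ne_zero.mpr h1
  have hz : c₂ - z ≠ 0 := sub_ne_zero.mpr h2.symm
  have h3 : ((dist c₁ c₂ : ℝ) : ℂ) ^ 2 = (c₂ - c₁) * (starRingEnd ℂ) (c₂ - c₁) := by
    rw [Complex.mul_conj, Complex.normSq_eq_norm_sq, dist_comm, dist_eq_norm]; push_cast; rfl
  rw [inversion_complex_form, inversion_complex_form, h3]
  have h4 : (starRingEnd ℂ) (c₁ + (c₂ - c₁) * (starRingEnd ℂ) (c₂ - c₁) /
      (starRingEnd ℂ) (z - c₁) - c₂)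
      = (starRingEnd ℂ) (c₂ - c₁) * (c₂ - z) / (z - c₁) := by
    have : (starRingEnd ℂ) (c₁ + (c₂ - c₁) * (starRingEnd ℂ) (c₂ - c₁) /
      (starRingEnd ℂ) (z - c₁) - c₂) = (starRingEnd ℂ) (c₂ - c₁) * (c₂ - c₁) / (z - c₁)
        - (starRingEnd ℂ) (c₂ - c₁) := by
      simp only [map_add, map_sub, map_mul, map_div₀, Complex.conj_conj]; ring
    rw [this]
    field_simp
    ring
  rw [h4]
  field_simp
  ring

/-- De Casteljau's observation in bifocal coordinates: if `f` and `g` are the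
inversions of the complex plane centred at the two distinct points `c₁` and `c₂`,
both with radius `R = dist c₁ c₂` (tangential power `R²`), then the composition of
the six alternating inversions `f, g, f, g, f, g` is the identity away from the
two centres. -/
theorem six_alternating_inversions_identity (c₁ c₂ : ℂ) (hne : c₁ ≠ c₂)
    (R : ℝ) (hR : R = dist c₁ c₂)
    (f g : ℂ → ℂ) (hf : f = inversion c₁ R) (hg : g = inversion c₂ R) :
    ∀ z : ℂ, z ≠ c₁ → z ≠ c₂ → (g ∘ f)^[3] z = z := by
  subst hR hf hg
  intro z h1 h2
  have hd : c₂ - c₁ ≠ 0 := sub_ne_zero.mpr hne.symm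
  have hw : z - c₁ ≠ 0 := sub_ne_zero.mpr h1
  have hz : c₂ - z ≠ 0 := sub_ne_zero.mpr h2.symm
  simp only [Function.iterate_succ, Function.iterate_zero, Function.comp_apply, id]
  have e1 : c₂ - (c₁ + (c₂ - c₁) ^ 2 / (c₂ - z)) = -((c₂ - c₁) * (z - c₁) / (c₂ - z)) := by
    field_simp
    ring
  have e2 : c₁ + (c₂ - c₁) ^ 2 / -((c₂ - c₁) * (z - c₁) / (c₂ - z))
      = c₁ - (c₂ - c₁) * (c₂ - z) / (z - c₁) := by
    field_simp
    ring
  have e3 : c₂ - (c₁ - (c₂ - c₁) * (c₂ - z) / (z - c₁)) = (c₂ - c₁) ^ 2 / (z - c₁) := by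
    field_simp
    ring
  rw [inversion_comp_moebius c₁ c₂ z h1 h2 hne,
    inversion_comp_moebius c₁ c₂ (c₁ + (c₂ - c₁) ^ 2 / (c₂ - z)) ?_ ?_ hne, e1, e2,
    inversion_comp_moebius c₁ c₂ _ ?_ ?_ hne, e3]
  · field_simp
    ring
  · intro h
    have : (c₂ - c₁) * (c₂ - z) / (z - c₁) = 0 := by linear_combination -h
    exact div_ne_zero (mul_ne_zero hd hz) hw this
  · intro h
    rw [h, sub_self] at e3
    exact div_ne_zero (pow_ne_zero 2 hd) hw e3.symm
  · intro h
    have : (c₂ - c₁) ^ 2 / (c₂ - z) = 0 := by linear_combination h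
    exact div_ne_zero (pow_ne_zero 2 hd) hz this
  · intro h
    rw [h, sub_self] at e1
    exact neg_ne_zero.mpr (div_ne_zero (mul_ne_zero hd hw) hz) e1.symm
end

section
/- Let q ≥ 1 be a natural number, let n = 2q + 1, and set d_k = sin(kπ/n) for 0 ≤ k ≤ q (so d_0 = 0). Then for every r with 1 ≤ r ≤ q one has d_q · (d_r − d_{r−1}) = d_1 · d_{q+1−r}, and consequently d_q · d_r = d_1 · ∑_{i = q−r+1}^{q} d_i. In particular all the ratios (d_r − d_{r−1})/d_{q+1−r} are equal to d_1/d_q. -/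
open Real Finset

/-- De Casteljau's theorem on golden ratios for regular polygons: with
`d k = sin (kπ/(2q+1))` the diagonal lengths of a regular `(2q+1)`-gon inscribed in a
circle of unit diameter, for every `1 ≤ r ≤ q` one has
`d q · (d r − d (r−1)) = d 1 · d (q+1−r)`, hence
`d q · d r = d 1 · ∑_{i=q−r+1}^{q} d i`, and all the ratios
`(d r − d (r−1)) / d (q+1−r)` equal `d 1 / d q`. -/
theorem golden_ratios_regular_polygon (q : ℕ) (hq : 1 ≤ q) (n : ℕ) (hn : n = 2 * q + 1)
    (d : ℕ → ℝ) (hd : ∀ k, d k = sin (k * π / n)) :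
    ∀ r : ℕ, 1 ≤ r → r ≤ q →
      d q * (d r - d (r - 1)) = d 1 * d (q + 1 - r) ∧
      d q * d r = d 1 * ∑ i ∈ Finset.Icc (q - r + 1) q, d i ∧
      (d r - d (r - 1)) / d (q + 1 - r) = d 1 / d q := by
  have hn0 : (n : ℝ) = 2 * q + 1 := by rw [hn]; push_cast; ring
  have hnpos : (0 : ℝ) < n := by rw [hn0]; positivity
  obtain ⟨t, ht⟩ : ∃ t : ℝ, t = π / (2 * n) := ⟨_, rfl⟩
  have hdt : ∀ k, d k = sin (2 * k * t) := by
    intro k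
    rw [hd, ht]
    congr 1
    field_simp
  have hpi : (2 * q + 1) * t = π / 2 := by
    rw [ht, ← hn0]
    field_simp
  have hdq : d q = cos t := by
    rw [hdt, ← sin_pi_div_two_sub, ← hpi]
    congr 1
    ring
  have hd1 : d 1 = 2 * sin t * cos t := by
    rw [hdt, ← sin_two_mul]
    congr 1
    push_cast
    ring
  have key : ∀ r : ℕ, r + 1 ≤ q → d q * (d (r + 1) - d r) = d 1 * d (q - r) := by
    intro r hr
    have h1 : d (q - r) = cos ((2 * r + 1) * t) := by
      rw [hdt, ← sin_pi_div_two_sub, ← hpi, Nat.cast_sub (by omega)]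
      congr 1
      ring
    have h2 : d (r + 1) = sin ((2 * r + 1) * t + t) := by
      rw [hdt]
      congr 1
      push_cast
      ring
    have h3 : d r = sin ((2 * r + 1) * t - t) := by
      rw [hdt]
      congr 1
      ring
    rw [h1, h2, h3, hdq, hd1, sin_add, sin_sub]
    ring
  have hpos : ∀ k : ℕ, 1 ≤ k → k ≤ q → 0 < d k := by
    intro k hk hkq
    rw [hd]
    have hk' : (1 : ℝ) ≤ k := by exact_mod_cast hk
    have hkq' : (k : ℝ) ≤ q := by exact_mod_cast hkq
    apply sin_pos_of_pos_of_lt_pi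
    · have := pi_pos
      positivity
    · rw [div_lt_iff₀ hnpos, mul_comm]
      apply mul_lt_mul_of_pos_left _ pi_pos
      rw [hn0]
      linarith
  have hsum : ∀ r : ℕ, r ≤ q → d q * d r = d 1 * ∑ i ∈ Finset.Icc (q - r + 1) q, d i := by
    intro r
    induction r with
    | zero =>
      intro _
      simp [hdt 0]
    | succ r ih =>
      intro hr
      have h := ih (by omega)
      have hk := key r hr
      rw [show q - (r + 1) + 1 = q - r by omega,
        ← Finset.add_sum_Ioc_eq_sum_Icc (show q - r ≤ q by omega),
        ← Finset.Icc_succ_left_eq_Ioc]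
      simp only [Nat.succ_eq_succ, Nat.succ_eq_add_one]
      linear_combination h + hk
  intro r hr1 hrq
  obtain ⟨s, rfl⟩ : ∃ s, r = s + 1 := ⟨r - 1, by omega⟩
  have hk := key s hrq
  have e : q + 1 - (s + 1) = q - s := by omega
  rw [e, Nat.add_sub_cancel]
  refine ⟨hk, hsum _ hrq, ?_⟩
  rw [div_eq_div_iff (hpos (q - s) (by omega) (by omega)).ne' (hpos q hq le_rfl).ne']
  linear_combination hk
end

section
/- Let u = sin(π/7), d = sin(2π/7), t = sin(3π/7), and set x₁ = t/d, x₂ = −u/t, x₃ = −d/u. Then each of x₁, x₂, x₃ is a root of the cubic X³ + X² − 2X − 1 = 0, and moreover x₁·x₂·x₃ = 1 and x₁ + x₂ + x₃ = −1. -/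
open Real

/-- De Casteljau's cubic for the heptagon: the signed diagonal ratios
`x₁ = t/d`, `x₂ = −u/t`, `x₃ = −d/u` of the regular heptagon (with
`u = sin(π/7)`, `d = sin(2π/7)`, `t = sin(3π/7)`) are roots of
`X³ + X² − 2X − 1 = 0`, with product `1` and sum `−1`. -/
theorem heptagon_ratios_cubic (u d t x₁ x₂ x₃ : ℝ)
    (hu : u = sin (π / 7)) (hd : d = sin (2 * π / 7)) (ht : t = sin (3 * π / 7))
    (hx₁ : x₁ = t / d) (hx₂ : x₂ = -u / t) (hx₃ : x₃ = -d / u) :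
    x₁ ^ 3 + x₁ ^ 2 - 2 * x₁ - 1 = 0 ∧
    x₂ ^ 3 + x₂ ^ 2 - 2 * x₂ - 1 = 0 ∧
    x₃ ^ 3 + x₃ ^ 2 - 2 * x₃ - 1 = 0 ∧
    x₁ * x₂ * x₃ = 1 ∧
    x₁ + x₂ + x₃ = -1 := by
  have hu0 : 0 < u := by
    rw [hu]; exact sin_pos_of_pos_of_lt_pi (by positivity) (by linarith [pi_pos])
  have ht0 : 0 < t := by
    rw [ht]; exact sin_pos_of_pos_of_lt_pi (by positivity) (by linarith [pi_pos])
  have hd0 : 0 < d := by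
    rw [hd]; exact sin_pos_of_pos_of_lt_pi (by positivity) (by linarith [pi_pos])
  obtain ⟨y, hy⟩ : ∃ y, y = 2 * cos (π / 7) := ⟨_, rfl⟩
  have hdu : d = u * y := by
    rw [hd, hu, hy, show 2 * π / 7 = 2 * (π / 7) by ring, sin_two_mul]; ring
  have htu : t = u * (y ^ 2 - 1) := by
    rw [ht, hu, hy, show 3 * π / 7 = 3 * (π / 7) by ring, sin_three_mul]
    linear_combination (-4 * sin (π / 7)) * sin_sq_add_cos_sq (π / 7)
  have htd : t = d * (y ^ 2 - 2) := by
    rw [ht, hd, hy, show 3 * π / 7 = π - 2 * (2 * π / 7) by ring, sin_pi_sub, sin_two_mul,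
      show 2 * π / 7 = 2 * (π / 7) by ring, cos_two_mul]
    ring
  have hc : y ^ 3 - y ^ 2 - 2 * y + 1 = 0 := by
    have h : u * (y ^ 3 - y ^ 2 - 2 * y + 1) = 0 := by
      linear_combination htu - htd - (y ^ 2 - 2) * hdu
    exact (mul_eq_zero.mp h).resolve_left hu0.ne'
  have h1 : x₁ = y ^ 2 - 2 := by
    rw [hx₁, div_eq_iff hd0.ne', htd]; ring
  have h3 : x₃ = -y := by
    rw [hx₃, div_eq_iff hu0.ne', hdu]; ring
  have h2 : x₂ = 1 + y - y ^ 2 := by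
    rw [hx₂, div_eq_iff ht0.ne', htu]
    linear_combination u * y * hc
  have hp : x₁ * x₂ * x₃ = 1 := by
    rw [hx₁, hx₂, hx₃]; field_simp
  refine ⟨?_, ?_, ?_, hp, ?_⟩
  · rw [h1]; linear_combination (y ^ 3 + y ^ 2 - 2 * y - 1) * hc
  · rw [h2]; linear_combination (-y ^ 3 + 2 * y ^ 2 + y - 1) * hc
  · rw [h3]; linear_combination -hc
  · rw [h1, h2, h3]; ring
end

section
/- Let n ≥ 1 be a natural number and let M be the n×n real matrix with entries (0-indexed) M i j = 1 if i + j ≥ n − 1 and M i j = 0 otherwise. Let v be the vector with entries v j = sin((j+1)·π/(2n+1)) for 0 ≤ j ≤ n−1. Then M·v = λ·v with λ = 1/(2·sin(π/(2(2n+1)))); that is, the vector of diagonal lengths of the regular (2n+1)-gon is an eigenvector of M. -/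
open Real

lemma golden_aux (h : ℝ) (a m : ℕ) :
    2 * sin h * ∑ j ∈ Finset.range m, (if a ≤ j then sin (2 * ((j : ℝ) + 1) * h) else 0) =
      if a ≤ m then cos ((2 * (a : ℝ) + 1) * h) - cos ((2 * (m : ℝ) + 1) * h) else 0 := by
  induction m with
  | zero =>
    by_cases ha : a = 0
    · subst ha; simp
    · simp [ha]
  | succ m ih =>
    rw [Finset.sum_range_succ, mul_add, ih]
    by_cases h1 : a ≤ m
    · have h2 : a ≤ m + 1 := by omega
      simp only [h1, h2, if_true]
      have e1 : (2 * (m : ℝ) + 1) * h = 2 * ((m : ℝ) + 1) * h - h := by ring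
      have e2 : (2 * ((m + 1 : ℕ) : ℝ) + 1) * h = 2 * ((m : ℝ) + 1) * h + h := by
        push_cast; ring
      rw [e1, e2, cos_sub, cos_add]
      ring
    · by_cases h2 : a = m + 1
      · subst h2; simp
      · have h3 : ¬ a ≤ m + 1 := by omega
        simp [h1, h3]

/-- De Casteljau's golden matrix acting on a regular `(2n+1)`-gon: the vector of
diagonal lengths `v j = sin((j+1)π/(2n+1))` is an eigenvector of the `n×n` 0-1
matrix `M` (with `M i j = 1` iff `i + j ≥ n − 1`) with eigenvalue
`λ = 1/(2·sin(π/(2(2n+1))))`. -/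
theorem golden_matrix_eigenvector (n : ℕ) (hn : 1 ≤ n)
    (M : Matrix (Fin n) (Fin n) ℝ)
    (hM : ∀ i j : Fin n, M i j = if (i : ℕ) + (j : ℕ) ≥ n - 1 then 1 else 0)
    (v : Fin n → ℝ) (hv : ∀ j : Fin n, v j = sin (((j : ℕ) + 1) * π / (2 * n + 1)))
    (lam : ℝ) (hlam : lam = 1 / (2 * sin (π / (2 * (2 * n + 1))))) :
    M.mulVec v = lam • v := by
  have hd : (0 : ℝ) < 2 * n + 1 := by positivity
  set h : ℝ := π / (2 * (2 * n + 1)) with hh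
  have hs : 0 < sin h := by
    apply sin_pos_of_pos_of_lt_pi
    · positivity
    · rw [hh]
      apply div_lt_self pi_pos
      have : (0 : ℝ) ≤ n := Nat.cast_nonneg n
      linarith
  have hv' : ∀ j : Fin n, v j = sin (2 * (((j : ℕ) : ℝ) + 1) * h) := by
    intro j
    rw [hv, hh]
    congr 1
    field_simp
  funext i
  have hi := i.2
  obtain ⟨a, ha⟩ : ∃ a : ℕ, n = a + i + 1 := ⟨n - 1 - i, by omega⟩
  have hsum : M.mulVec v i =
      ∑ j ∈ Finset.range n, (if a ≤ j then sin (2 * ((j : ℝ) + 1) * h) else 0) := by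
    rw [← Fin.sum_univ_eq_sum_range
      (fun j : ℕ => if a ≤ j then sin (2 * ((j : ℝ) + 1) * h) else 0)]
    simp only [Matrix.mulVec, dotProduct]
    refine Finset.sum_congr rfl fun j _ => ?_
    rw [hM, hv']
    by_cases c : a ≤ (j : ℕ)
    · have c' : (i : ℕ) + (j : ℕ) ≥ n - 1 := by omega
      simp [c, c']
    · have c' : ¬ ((i : ℕ) + (j : ℕ) ≥ n - 1) := by omega
      rw [if_neg c, if_neg c', zero_mul]
  have key := golden_aux h a n
  rw [← hsum, if_pos (by omega)] at key
  have hpi : (2 * (n : ℝ) + 1) * h = π / 2 := by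
    rw [hh]; field_simp
  have han : (n : ℝ) = a + (i : ℕ) + 1 := by exact_mod_cast ha
  have e : (2 * (a : ℝ) + 1) * h = π / 2 - 2 * (((i : ℕ) : ℝ) + 1) * h := by
    rw [← hpi, han]; ring
  rw [hpi, e, cos_pi_div_two_sub, cos_pi_div_two, sub_zero, ← hv'] at key
  rw [Pi.smul_apply, smul_eq_mul, hlam, ← key]
  field_simp
end

section
/- Let n ≥ 1 be a natural number and let M be the n×n real matrix with entries (0-indexed) M i j = 1 if i + j ≥ n − 1 and M i j = 0 otherwise. Then for every j with 0 ≤ j ≤ n−1, the ratio of the entries in the last row of M^k converges, as k → ∞, to the corresponding ratio of diagonals of the regular (2n+1)-gon: lim_{k→∞} (M^k)_{n−1, j} / (M^k)_{n−1, n−1} = sin((j+1)·π/(2n+1)) / sin(n·π/(2n+1)). -/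
open Real Filter

/-- Power method for a symmetric matrix with positive square. -/
lemma power_limit {ι : Type*} [Fintype ι] [DecidableEq ι] (M : Matrix ι ι ℝ) (v : ι → ℝ) (L : ℝ)
    (hL : 0 < L) (hsym : ∀ i j, M i j = M j i) (hM0 : ∀ i j, 0 ≤ M i j)
    (hM2 : ∀ i j, 1 ≤ (M * M) i j)
    (hv0 : ∀ i, 0 < v i) (hv1 : ∀ i, v i ≤ 1) (hv : ∀ j, ∑ l, v l * M l j = L * v j) (i j : ι) :
    Tendsto (fun k : ℕ => (M ^ k) i j / L ^ k) atTop (nhds (v i / (∑ l, v l * v l) * v j)) := by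
  set S := ∑ l, v l * v l with hS
  have hSpos : 0 < S := Finset.sum_pos (fun l _ => mul_pos (hv0 l) (hv0 l)) ⟨i, Finset.mem_univ i⟩
  set c := v i / S with hc
  set w : ℕ → ι → ℝ := fun k j => (M ^ k) i j - c * L ^ k * v j with hw
  have hv' : ∀ j, ∑ l, M j l * v l = L * v j := by
    intro j
    rw [← hv j]
    exact Finset.sum_congr rfl fun l _ => by rw [hsym j l, mul_comm]
  have hvv : ∀ j, ∑ l, v l * (M * M) l j = L ^ 2 * v j := by
    intro j
    simp only [Matrix.mul_apply, Finset.mul_sum]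
    rw [Finset.sum_comm]
    simp only [← mul_assoc, ← Finset.sum_mul, hv]
    simp only [mul_assoc, ← Finset.mul_sum, hv]
    ring
  have step1 : ∀ k j, w (k + 1) j = ∑ l, w k l * M l j := by
    intro k j
    simp only [hw, sub_mul, Finset.sum_sub_distrib, pow_succ, Matrix.mul_apply]
    simp only [mul_assoc, ← Finset.mul_sum, hv]
  have step2 : ∀ k j, w (k + 2) j = ∑ l, w k l * (M * M) l j := by
    intro k j
    simp only [hw, sub_mul, Finset.sum_sub_distrib]
    rw [pow_add M k 2, pow_two M, Matrix.mul_apply]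
    simp only [mul_assoc, ← Finset.mul_sum, hvv]
    ring
  have orth : ∀ k, ∑ l, w k l * v l = 0 := by
    intro k
    induction k with
    | zero =>
      simp only [hw, sub_mul, Finset.sum_sub_distrib, pow_zero, Matrix.one_apply, mul_assoc,
        ← Finset.mul_sum, ← hS]
      simp [hc]
      field_simp
      simp
    | succ k ih =>
      simp only [step1, Finset.sum_mul]
      rw [Finset.sum_comm]
      simp only [mul_assoc, ← Finset.mul_sum, hv']
      have : ∑ l, w k l * (L * v l) = L * ∑ l, w k l * v l := by
        rw [Finset.mul_sum]
        exact Finset.sum_congr rfl fun l _ => by ring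
      rw [this, ih, mul_zero]
  have hN0 : ∀ l j, 0 ≤ (M * M) l j - v l * v j := by
    intro l j
    have := hM2 l j
    have := mul_le_one₀ (hv1 l) (hv0 j).le (hv1 j)
    linarith
  have hNv : ∀ j, ∑ l, v l * ((M * M) l j - v l * v j) = (L ^ 2 - S) * v j := by
    intro j
    simp only [mul_sub, Finset.sum_sub_distrib, hvv, ← mul_assoc, ← Finset.sum_mul, ← hS]
    ring
  have hmu : 0 ≤ L ^ 2 - S := by
    have h : 0 ≤ (L ^ 2 - S) * v i := by
      rw [← hNv i]
      exact Finset.sum_nonneg fun l _ => mul_nonneg (hv0 l).le (hN0 l i)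
    exact nonneg_of_mul_nonneg_left h (hv0 i)
  set r := (L ^ 2 - S) / L ^ 2 with hr
  have hr0 : 0 ≤ r := by positivity
  have hr1 : r < 1 := by
    rw [hr, div_lt_one (by positivity)]; linarith
  have hrL : r * L ^ 2 = L ^ 2 - S := by rw [hr]; field_simp
  obtain ⟨C, hC⟩ : ∃ C, ∀ l, |w 0 l| ≤ C * v l := by
    refine ⟨∑ l, |w 0 l| / v l, fun l => ?_⟩
    rw [← div_le_iff₀ (hv0 l)]
    exact Finset.single_le_sum (f := fun l => |w 0 l| / v l)
      (fun l _ => div_nonneg (abs_nonneg _) (hv0 l).le) (Finset.mem_univ l)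
  have b2 : ∀ k D, (∀ l, |w k l| ≤ D * v l) → ∀ j, |w (k + 2) j| ≤ D * (r * L ^ 2) * v j := by
    intro k D h j
    have e : w (k + 2) j = ∑ l, w k l * ((M * M) l j - v l * v j) := by
      simp only [mul_sub, Finset.sum_sub_distrib, ← mul_assoc, ← Finset.sum_mul, orth, step2]
      ring
    rw [e, hrL, mul_assoc, ← hNv, Finset.mul_sum]
    refine (Finset.abs_sum_le_sum_abs _ _).trans (Finset.sum_le_sum fun l _ => ?_)
    rw [abs_mul, abs_of_nonneg (hN0 l j), ← mul_assoc]
    exact mul_le_mul_of_nonneg_right (h l) (hN0 l j)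
  have b1 : ∀ k D, (∀ l, |w k l| ≤ D * v l) → ∀ j, |w (k + 1) j| ≤ D * L * v j := by
    intro k D h j
    rw [step1, mul_assoc, ← hv, Finset.mul_sum]
    refine (Finset.abs_sum_le_sum_abs _ _).trans (Finset.sum_le_sum fun l _ => ?_)
    rw [abs_mul, abs_of_nonneg (hM0 l j), ← mul_assoc]
    exact mul_le_mul_of_nonneg_right (h l) (hM0 l j)
  have bound : ∀ k, ∀ j, |w k j| ≤ C * r ^ (k / 2) * L ^ k * v j := by
    intro k
    induction k using Nat.twoStepInduction with
    | zero => simpa using hC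
    | one => simpa using b1 0 C hC
    | more k ih _ =>
      intro j
      refine (b2 k _ ih j).trans (le_of_eq ?_)
      rw [show (k + 2) / 2 = k / 2 + 1 by omega]
      ring
  have lim : Tendsto (fun k : ℕ => C * r ^ (k / 2) * v j) atTop (nhds 0) := by
    have h := (tendsto_pow_atTop_nhds_zero_of_lt_one hr0 hr1).comp
      (Nat.tendsto_div_const_atTop (n := 2) (by norm_num))
    simpa using (h.const_mul C).mul_const (v j)
  have lim2 : Tendsto (fun k : ℕ => w k j / L ^ k) atTop (nhds 0) := by
    refine squeeze_zero_norm (fun k => ?_) lim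
    rw [Real.norm_eq_abs, abs_div, abs_of_pos (pow_pos hL k), div_le_iff₀ (pow_pos hL k)]
    refine (bound k j).trans (le_of_eq (by ring))
  have := lim2.add_const (c * v j)
  rw [zero_add] at this
  refine this.congr fun k => ?_
  have : L ^ k ≠ 0 := (pow_pos hL k).ne'
  simp only [hw]
  field_simp
  ring

lemma sum_sin_tail (t : ℝ) (a N : ℕ) (h : a ≤ N) :
    (∑ l ∈ Finset.range N, if a ≤ l then sin ((l + 1) * t) else 0) * (2 * sin (t / 2)) =
      cos ((a + 1 / 2) * t) - cos ((N + 1 / 2) * t) := by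
  induction N, h using Nat.le_induction with
  | base =>
    rw [Finset.sum_eq_zero]
    · simp
    · intro l hl
      rw [if_neg]
      simpa using hl
  | succ N hN ih =>
    rw [Finset.sum_range_succ, add_mul, ih, if_pos hN]
    have e1 : ((N : ℝ) + 1 / 2) * t = (N + 1) * t - t / 2 := by ring
    have e2 : (((N + 1 : ℕ) : ℝ) + 1 / 2) * t = (N + 1) * t + t / 2 := by push_cast; ring
    rw [e1, e2, cos_sub, cos_add]
    ring



/-- De Casteljau's golden matrix theorem: for the `n×n` 0-1 matrix `M` with
`M i j = 1` iff `i + j ≥ n − 1`, the ratios of the entries in the last row of `M^k`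
converge, as `k → ∞`, to the corresponding ratios of the diagonal lengths
`sin((j+1)π/(2n+1))` of the regular `(2n+1)`-gon. -/
theorem golden_matrix_power_ratios (n : ℕ) (hn : 1 ≤ n)
    (M : Matrix (Fin n) (Fin n) ℝ)
    (hM : ∀ i j : Fin n, M i j = if (i : ℕ) + (j : ℕ) ≥ n - 1 then 1 else 0) :
    ∀ j : Fin n,
      Tendsto (fun k : ℕ =>
          (M ^ k) (⟨n - 1, by omega⟩ : Fin n) j /
          (M ^ k) (⟨n - 1, by omega⟩ : Fin n) (⟨n - 1, by omega⟩ : Fin n))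
        atTop
        (nhds (sin (((j : ℕ) + 1) * π / (2 * n + 1)) / sin (n * π / (2 * n + 1)))) := by
  intro j
  have hnR : (1 : ℝ) ≤ n := by exact_mod_cast hn
  set t : ℝ := π / (2 * n + 1) with ht
  have hpi : (2 * n + 1) * t = π := by rw [ht]; field_simp
  have ht0 : 0 < t := by positivity
  have hs : 0 < sin (t / 2) := sin_pos_of_pos_of_lt_pi (by positivity) (by nlinarith)
  set v : Fin n → ℝ := fun l => sin (((l : ℕ) + 1) * t) with hvdef
  have hv0 : ∀ l, 0 < v l := by
    intro l
    have hl : ((l : ℕ) : ℝ) + 1 ≤ n := by exact_mod_cast l.2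
    exact sin_pos_of_pos_of_lt_pi (by positivity) (by nlinarith)
  have hM2 : ∀ i j, 1 ≤ (M * M) i j := by
    intro i j
    rw [Matrix.mul_apply]
    have h0 : ∀ l ∈ Finset.univ, 0 ≤ M i l * M l j := by
      intro l _
      rw [hM, hM]
      split_ifs <;> norm_num
    refine le_trans (le_of_eq ?_)
      (Finset.single_le_sum h0 (Finset.mem_univ (⟨n - 1, by omega⟩ : Fin n)))
    rw [hM, hM, if_pos (by simp), if_pos (by simp), one_mul]
  have hv : ∀ j, ∑ l, v l * M l j = (1 / (2 * sin (t / 2))) * v j := by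
    intro j
    have hj := j.2
    have e : ∑ l, v l * M l j =
        ∑ l ∈ Finset.range n, if n - 1 - (j : ℕ) ≤ l then sin ((l + 1) * t) else 0 := by
      rw [← Fin.sum_univ_eq_sum_range
        (fun l : ℕ => if n - 1 - (j : ℕ) ≤ l then sin ((l + 1) * t) else 0) n]
      refine Finset.sum_congr rfl fun l _ => ?_
      rw [hM]
      by_cases h : (l : ℕ) + (j : ℕ) ≥ n - 1
      · rw [if_pos h, if_pos (by omega), mul_one]
      · rw [if_neg h, if_neg (by omega), mul_zero]
    have k := sum_sin_tail t (n - 1 - (j : ℕ)) n (by omega)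
    rw [← e] at k
    have c1 : ((n : ℝ) + 1 / 2) * t = π / 2 := by linarith
    have c2 : ((n - 1 - (j : ℕ) : ℕ) : ℝ) = n - 1 - (j : ℕ) := by
      rw [Nat.cast_sub (by omega), Nat.cast_sub hn]; simp
    have c3 : ((n : ℝ) - 1 - (j : ℕ) + 1 / 2) * t = π / 2 - ((j : ℕ) + 1) * t := by
      rw [← c1]; ring
    rw [c1, c2, c3, cos_pi_div_two, cos_pi_div_two_sub, sub_zero] at k
    rw [one_div, inv_mul_eq_div, eq_div_iff (by positivity)]
    exact k
  have key := power_limit M v (1 / (2 * sin (t / 2))) (by positivity)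
    (fun i j => by rw [hM, hM, add_comm]) (fun i j => by rw [hM]; split_ifs <;> norm_num)
    hM2 hv0 (fun l => sin_le_one _) hv
  set z : Fin n := ⟨n - 1, by omega⟩ with hz
  have hS : 0 < ∑ l, v l * v l :=
    Finset.sum_pos (fun l _ => mul_pos (hv0 l) (hv0 l)) ⟨z, Finset.mem_univ z⟩
  have hz0 := hv0 z
  have hc : v z / (∑ l, v l * v l) ≠ 0 := (div_pos hz0 hS).ne'
  have lim := (key z j).div (key z z) (mul_ne_zero hc hz0.ne')
  have e1 : sin (((j : ℕ) + 1) * π / (2 * n + 1)) = v j := by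
    simp only [hvdef, ht, mul_div_assoc]
  have e2 : sin (n * π / (2 * n + 1)) = v z := by
    simp only [hvdef, ht, hz, mul_div_assoc]
    rw [Nat.cast_sub hn]; simp
  rw [e1, e2]
  rw [mul_div_mul_left _ _ hc] at lim
  refine lim.congr fun k => ?_
  exact div_div_div_cancel_right₀ (pow_pos (one_div_pos.mpr (mul_pos two_pos hs)) k).ne' _ _
end

section
/- For real numbers d, a, b, c, t, x, y, z, let Q₁* be the anti-quaternion matrix associated with (d,a,b,c) and let Q₂ be the matrix quaternion associated with (t,x,y,z). Set P = Q₁*·Q₂. Then: (i) P = Q₂·Q₁* (a quaternion and an anti-quaternion commute); (ii) P·Pᵀ = Pᵀ·P = n₁·n₂·I₄, where n₁ = d² + a² + b² + c², n₂ = t² + x² + y² + z², and I₄ is the 4×4 identity matrix; and (iii) det P = (n₁·n₂)², so P is positive. -/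
/-- De Casteljau's matrix quaternion associated with `(t,x,y,z) ∈ ℝ⁴`. -/
def matQ (t x y z : ℝ) : Matrix (Fin 4) (Fin 4) ℝ :=
  !![t, -x, -y, -z;
     x,  t, -z,  y;
     y,  z,  t, -x;
     z, -y,  x,  t]

/-- De Casteljau's anti-quaternion associated with `(t,x,y,z) ∈ ℝ⁴`. -/
def antiQ (t x y z : ℝ) : Matrix (Fin 4) (Fin 4) ℝ :=
  !![ t,  x,  y,  z;
     -x,  t, -z,  y;
     -y,  z,  t, -x;
     -z, -y,  x,  t]

theorem matQ_mul_transpose (t x y z : ℝ) : matQ t x y z * (matQ t x y z).transpose =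
    (t ^ 2 + x ^ 2 + y ^ 2 + z ^ 2) • (1 : Matrix (Fin 4) (Fin 4) ℝ) := by
  ext i j
  fin_cases i <;> fin_cases j <;>
    simp [matQ, Matrix.mul_apply, Fin.sum_univ_four] <;> ring

theorem matQ_transpose_mul (t x y z : ℝ) : (matQ t x y z).transpose * matQ t x y z =
    (t ^ 2 + x ^ 2 + y ^ 2 + z ^ 2) • (1 : Matrix (Fin 4) (Fin 4) ℝ) := by
  ext i j
  fin_cases i <;> fin_cases j <;>
    simp [matQ, Matrix.mul_apply, Fin.sum_univ_four] <;> ring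

theorem antiQ_mul_transpose (t x y z : ℝ) : antiQ t x y z * (antiQ t x y z).transpose =
    (t ^ 2 + x ^ 2 + y ^ 2 + z ^ 2) • (1 : Matrix (Fin 4) (Fin 4) ℝ) := by
  ext i j
  fin_cases i <;> fin_cases j <;>
    simp [antiQ, Matrix.mul_apply, Fin.sum_univ_four] <;> ring

theorem antiQ_transpose_mul (t x y z : ℝ) : (antiQ t x y z).transpose * antiQ t x y z =
    (t ^ 2 + x ^ 2 + y ^ 2 + z ^ 2) • (1 : Matrix (Fin 4) (Fin 4) ℝ) := by
  ext i j
  fin_cases i <;> fin_cases j <;>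
    simp [antiQ, Matrix.mul_apply, Fin.sum_univ_four] <;> ring

theorem antiQ_mul_matQ_comm (d a b c t x y z : ℝ) :
    antiQ d a b c * matQ t x y z = matQ t x y z * antiQ d a b c := by
  ext i j
  fin_cases i <;> fin_cases j <;>
    simp [antiQ, matQ, Matrix.mul_apply, Fin.sum_univ_four] <;> ring

theorem matQ_det (t x y z : ℝ) :
    (matQ t x y z).det = (t ^ 2 + x ^ 2 + y ^ 2 + z ^ 2) ^ 2 := by
  simp [matQ, Matrix.det_succ_row_zero, Fin.sum_univ_succ, Fin.succAbove]
  ring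

theorem antiQ_det (t x y z : ℝ) :
    (antiQ t x y z).det = (t ^ 2 + x ^ 2 + y ^ 2 + z ^ 2) ^ 2 := by
  simp [antiQ, Matrix.det_succ_row_zero, Fin.sum_univ_succ, Fin.succAbove]
  ring

/-- De Casteljau's theorem on quaternion products: the product `P = Q₁*·Q₂` of an
anti-quaternion and a matrix quaternion commutes (`P = Q₂·Q₁*`), satisfies
`P·Pᵀ = Pᵀ·P = n₁n₂·I₄` with `n₁, n₂` the two quaternion norms, and has
determinant `(n₁n₂)²`, so `P` is positive. -/
theorem quaternion_antiquaternion_product (d a b c t x y z : ℝ)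
    (P : Matrix (Fin 4) (Fin 4) ℝ) (hP : P = antiQ d a b c * matQ t x y z)
    (n₁ n₂ : ℝ) (hn₁ : n₁ = d ^ 2 + a ^ 2 + b ^ 2 + c ^ 2)
    (hn₂ : n₂ = t ^ 2 + x ^ 2 + y ^ 2 + z ^ 2) :
    P = matQ t x y z * antiQ d a b c ∧
    P * P.transpose = (n₁ * n₂) • (1 : Matrix (Fin 4) (Fin 4) ℝ) ∧
    P.transpose * P = (n₁ * n₂) • (1 : Matrix (Fin 4) (Fin 4) ℝ) ∧
    P.det = (n₁ * n₂) ^ 2 := by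
  subst hP hn₁ hn₂
  refine ⟨antiQ_mul_matQ_comm .., ?_, ?_, ?_⟩
  · rw [Matrix.transpose_mul, Matrix.mul_assoc, ← Matrix.mul_assoc (matQ t x y z),
      matQ_mul_transpose, Matrix.smul_mul, Matrix.one_mul, Matrix.mul_smul,
      antiQ_mul_transpose, smul_smul, mul_comm]
  · rw [Matrix.transpose_mul, Matrix.mul_assoc, ← Matrix.mul_assoc (antiQ d a b c).transpose,
      antiQ_transpose_mul, Matrix.smul_mul, Matrix.one_mul, Matrix.mul_smul,
      matQ_transpose_mul, smul_smul]
  · rw [Matrix.det_mul, matQ_det, antiQ_det, mul_pow]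
end

section
/- For real numbers d, a, b, c, t, x, y, z, let Q₁* be the anti-quaternion matrix associated with (d,a,b,c), let Q₂ be the matrix quaternion associated with (t,x,y,z), and let T be the tetragonal transformation on 4×4 matrices. Then T(Q₁*·Q₂) = 2·B, where B is the rank-one outer-product matrix with rows (dt, at, bt, ct), (dx, ax, bx, cx), (dy, ay, by, cy), (dz, az, bz, cz), i.e. B_{ij} = (t,x,y,z)_i · (d,a,b,c)_j. -/
/-- De Casteljau's tetragonal transformation on 4×4 real matrices
(equation (13) of *Les Quaternions*). -/
noncomputable def tetragonal (A : Matrix (Fin 4) (Fin 4) ℝ) : Matrix (Fin 4) (Fin 4) ℝ :=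
  (1 / 2 : ℝ) •
    !![A 0 0 + A 1 1 + A 2 2 + A 3 3,  A 0 1 - A 1 0 - A 2 3 + A 3 2,
       A 0 2 + A 1 3 - A 2 0 - A 3 1,  A 0 3 - A 1 2 + A 2 1 - A 3 0;
       -A 0 1 + A 1 0 - A 2 3 + A 3 2, A 0 0 + A 1 1 - A 2 2 - A 3 3,
       -A 0 3 + A 1 2 + A 2 1 - A 3 0, A 0 2 + A 1 3 + A 2 0 + A 3 1;
       -A 0 2 + A 1 3 + A 2 0 - A 3 1, A 0 3 + A 1 2 + A 2 1 + A 3 0,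
       A 0 0 - A 1 1 + A 2 2 - A 3 3,  -A 0 1 - A 1 0 + A 2 3 + A 3 2;
       -A 0 3 - A 1 2 + A 2 1 + A 3 0, -A 0 2 + A 1 3 - A 2 0 + A 3 1,
       A 0 1 + A 1 0 + A 2 3 + A 3 2,  A 0 0 - A 1 1 - A 2 2 + A 3 3]

/-- The tetragonal transformation recovers the factorising vectors from a
quaternion–anti-quaternion product: `T(Q₁*·Q₂) = 2·B` with
`B i j = (t,x,y,z) i · (d,a,b,c) j`. -/
theorem tetragonal_of_product (d a b c t x y z : ℝ)
    (B : Matrix (Fin 4) (Fin 4) ℝ)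
    (hB : ∀ i j : Fin 4, B i j = ![t, x, y, z] i * ![d, a, b, c] j) :
    tetragonal (antiQ d a b c * matQ t x y z) = (2 : ℝ) • B := by
  have hM := hB
  ext i j
  rw [Matrix.smul_apply, hM]
  fin_cases i <;> fin_cases j <;>
    simp [tetragonal, antiQ, matQ, Matrix.mul_apply, Fin.sum_univ_four] <;> ring
end
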